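/- Finite-horizon optimal values converge to the infinite-horizon optimal value: for a finite MDP with 0 ≤ γ < 1, let V* : S → ℝ be the unique solution of T V* = V*. Then for every x ∈ S, the sequence n ↦ V*_n(x) of optimal horizon-n values tends to V*(x) as n → ∞. -/

import Mathlib

/-!
Convergence of value iteration. By the principle of optimality (`Vhor_le_iterate` and
`exists_Vhor_eq_iterate`), the optimal horizon-`n` value is the `n`-th iterate `T^n 0` of the
Bellman operator, and a single policy sequence attains it at all states simultaneously. Since each
`P a x` is a probability vector, `T` is monotone and turns a constant shift by `C` into a shift by
`γ * C` (`bellman_le_add`); hence it is a `γ`-contraction in the sup norm, and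
`|T^n 0 x - V* x| ≤ γ ^ n * C` for any bound `C` on `|V*|`.
-/

open Filter

/-- Horizon-`n` value of a policy sequence `π : ℕ → S → A`. -/
noncomputable def Vhor {S A : Type*} [Fintype S] (P R : A → S → S → ℝ) (γ : ℝ) :
    ℕ → (ℕ → S → A) → S → ℝ
  | 0, _, _ => 0
  | n + 1, π, x =>
      ∑ y, P (π 0 x) x y * (R (π 0 x) x y + γ * Vhor P R γ n (fun i => π (i + 1)) y)

/-- Bellman optimality operator `T`. -/
noncomputable def bellman {S A : Type*} [Fintype S] [Fintype A] [Nonempty A]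
    (P R : A → S → S → ℝ) (γ : ℝ) (f : S → ℝ) (x : S) : ℝ :=
  Finset.univ.sup' Finset.univ_nonempty
    (fun a : A => ∑ y, P a x y * (R a x y + γ * f y))

section

variable {S A : Type*} [Fintype S] [Fintype A] [Nonempty A]

/-- Monotonicity and discounting of `T` in one inequality; both halves of the contraction estimate
are instances of it, and `C = 0` is plain monotonicity. -/
lemma bellman_le_add {P : A → S → S → ℝ} (R : A → S → S → ℝ) {γ : ℝ} (hγ0 : 0 ≤ γ)
    (hP0 : ∀ a x y, 0 ≤ P a x y) (hP1 : ∀ a x, ∑ y, P a x y = 1)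
    {f g : S → ℝ} {C : ℝ} (h : ∀ y, f y ≤ g y + C) (x : S) :
    bellman P R γ f x ≤ bellman P R γ g x + γ * C := by
  refine Finset.sup'_le _ _ fun a _ => ?_
  calc ∑ y, P a x y * (R a x y + γ * f y)
      ≤ ∑ y, P a x y * (R a x y + γ * (g y + C)) := by
        gcongr with y
        · exact hP0 a x y
        · exact h y
    _ = ∑ y, P a x y * (R a x y + γ * g y) + (∑ y, P a x y) * (γ * C) := by
        rw [Finset.sum_mul, ← Finset.sum_add_distrib]
        exact Finset.sum_congr rfl fun y _ => by ring
    _ ≤ bellman P R γ g x + γ * C := by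
        rw [hP1, one_mul]
        gcongr
        exact Finset.le_sup' (fun a : A => ∑ y, P a x y * (R a x y + γ * g y)) (Finset.mem_univ a)

lemma Vhor_le_iterate {P : A → S → S → ℝ} (R : A → S → S → ℝ) {γ : ℝ} (hγ0 : 0 ≤ γ)
    (hP0 : ∀ a x y, 0 ≤ P a x y) (n : ℕ) (π : ℕ → S → A) (x : S) :
    Vhor P R γ n π x ≤ (bellman P R γ)^[n] 0 x := by
  induction n generalizing π x with
  | zero => simp [Vhor]
  | succ n ih =>
    rw [Function.iterate_succ_apply', Vhor]
    calc ∑ y, P (π 0 x) x y * (R (π 0 x) x y + γ * Vhor P R γ n (fun i => π (i + 1)) y)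
        ≤ ∑ y, P (π 0 x) x y * (R (π 0 x) x y + γ * (bellman P R γ)^[n] 0 y) := by
          gcongr with y
          · exact hP0 _ x y
          · exact ih _ y
      _ ≤ _ := Finset.le_sup'
          (fun a : A => ∑ y, P a x y * (R a x y + γ * (bellman P R γ)^[n] 0 y))
          (Finset.mem_univ (π 0 x))

/-- The greedy policy sequence, obtained by backward induction on the horizon, is optimal at every
state at once. -/
lemma exists_Vhor_eq_iterate (P R : A → S → S → ℝ) (γ : ℝ) (n : ℕ) :
    ∃ π : ℕ → S → A, ∀ x, Vhor P R γ n π x = (bellman P R γ)^[n] 0 x := by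
  induction n with
  | zero => exact ⟨fun _ _ => Classical.arbitrary A, fun x => by simp [Vhor]⟩
  | succ n ih =>
    obtain ⟨π, hπ⟩ := ih
    have hgreedy : ∀ x, ∃ a : A, bellman P R γ ((bellman P R γ)^[n] 0) x =
        ∑ y, P a x y * (R a x y + γ * (bellman P R γ)^[n] 0 y) := fun x => by
      obtain ⟨a, -, ha⟩ := Finset.exists_mem_eq_sup' Finset.univ_nonempty
        (fun a : A => ∑ y, P a x y * (R a x y + γ * (bellman P R γ)^[n] 0 y))
      exact ⟨a, ha⟩
    choose d hd using hgreedy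
    refine ⟨fun i => Nat.casesOn i d π, fun x => ?_⟩
    rw [Function.iterate_succ_apply', hd, Vhor]
    simp only [hπ]
    rfl

lemma iSup_Vhor_eq_iterate {P : A → S → S → ℝ} (R : A → S → S → ℝ) {γ : ℝ} (hγ0 : 0 ≤ γ)
    (hP0 : ∀ a x y, 0 ≤ P a x y) (n : ℕ) (x : S) :
    ⨆ π : ℕ → S → A, Vhor P R γ n π x = (bellman P R γ)^[n] 0 x := by
  obtain ⟨π, hπ⟩ := exists_Vhor_eq_iterate P R γ n
  have hg : IsGreatest (Set.range fun π : ℕ → S → A => Vhor P R γ n π x)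
      ((bellman P R γ)^[n] 0 x) :=
    ⟨⟨π, hπ x⟩, Set.forall_mem_range.2 fun π => Vhor_le_iterate R hγ0 hP0 n π x⟩
  exact hg.csSup_eq

lemma abs_iterate_sub_le {P : A → S → S → ℝ} (R : A → S → S → ℝ) {γ : ℝ} (hγ0 : 0 ≤ γ)
    (hP0 : ∀ a x y, 0 ≤ P a x y) (hP1 : ∀ a x, ∑ y, P a x y = 1)
    {V : S → ℝ} (hV : bellman P R γ V = V) {C : ℝ} (hC : ∀ x, |V x| ≤ C) (n : ℕ) (x : S) :
    |(bellman P R γ)^[n] 0 x - V x| ≤ γ ^ n * C := by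
  induction n generalizing x with
  | zero => simpa using hC x
  | succ n ih =>
    have h₁ := bellman_le_add R hγ0 hP0 hP1 (f := (bellman P R γ)^[n] 0) (g := V)
      (C := γ ^ n * C) (fun y => by linarith [(abs_le.1 (ih y)).2]) x
    have h₂ := bellman_le_add R hγ0 hP0 hP1 (f := V) (g := (bellman P R γ)^[n] 0)
      (C := γ ^ n * C) (fun y => by linarith [(abs_le.1 (ih y)).1]) x
    rw [hV] at h₁ h₂
    rw [Function.iterate_succ_apply', pow_succ', mul_assoc, abs_le]
    constructor <;> linarith

end

/-- Finite-horizon optimal values converge to the infinite-horizon optimal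
value, the fixed point of the Bellman optimality operator. -/
theorem finite_horizon_optimal_values_tendsto_fixed_point
    {S A : Type*} [Fintype S] [Nonempty S] [Fintype A] [Nonempty A]
    (P R : A → S → S → ℝ) (γ : ℝ) (hγ0 : 0 ≤ γ) (hγ1 : γ < 1)
    (hP0 : ∀ a x y, 0 ≤ P a x y) (hP1 : ∀ a x, ∑ y, P a x y = 1)
    (Vstar : S → ℝ) (hVstar : bellman P R γ Vstar = Vstar) :
    ∀ x : S, Tendsto (fun n : ℕ => ⨆ π : ℕ → S → A, Vhor P R γ n π x)
      atTop (nhds (Vstar x)) := by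
  intro x
  simp only [iSup_Vhor_eq_iterate R hγ0 hP0]
  have hC : ∀ x, |Vstar x| ≤ ‖Vstar‖ := fun x => norm_le_pi_norm Vstar x
  have hlim : Tendsto (fun n : ℕ => γ ^ n * ‖Vstar‖) atTop (nhds 0) := by
    simpa using (tendsto_pow_atTop_nhds_zero_of_lt_one hγ0 hγ1).mul_const ‖Vstar‖
  rw [tendsto_iff_norm_sub_tendsto_zero]
  exact squeeze_zero (fun _ => norm_nonneg _)
    (fun n => abs_iterate_sub_le R hγ0 hP0 hP1 hVstar hC n x) hlim
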